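/- (Existence and uniqueness for the δ-regularized system, with uniform bounds.) Under the stated assumptions on Z, V, X, A, 𝕍, R and F, for every δ > 0, every z₀ ∈ Z and every ℓ* ∈ V*, there exists a unique function z_δ : [0,∞) → Z with z_δ(0) = z₀ such that z_δ and its derivative ż_δ are Lipschitz continuous as maps into Z (i.e. z_δ ∈ W^{2,∞}((0,∞);Z)) and, for all t ≥ 0 and all w ∈ Z, R_δ(w) ≥ R_δ(ż_δ(t)) + ⟨ℓ* − DI(z_δ(t)), w − ż_δ(t)⟩, where R_δ(v) := R(v) + ½⟨𝕍v,v⟩ + (δ/2)⟨Av,v⟩. Moreover, for every ρ > 0 there exists C(ρ) > 0, independent of δ, such that whenever ‖z₀‖_Z + ‖ℓ*‖_{V*} ≤ ρ one has sup_{t≥0} ‖z_δ(t)‖_Z ≤ C(ρ) and ∫₀^∞ R_δ(ż_δ(t)) dt ≤ C(ρ). -/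

import Mathlib

open MeasureTheory

/-- A `W^{2,∞}`-solution of the `δ`-regularized system
`0 ∈ ∂R_δ(ż(t)) + DI(z(t)) − ℓ*`, `z(0) = z₀`: both `z` and its derivative
`zd` are Lipschitz maps into `Z` on `[0,∞)`, and for all `t ≥ 0` and `w ∈ Z`
one has `R_δ(w) ≥ R_δ(ż(t)) + ⟨ℓ* − DI(z(t)), w − ż(t)⟩`, where
`R_δ(v) = R(v) + ½⟨𝕍v,v⟩ + (δ/2)⟨Av,v⟩` and `DI(z) = Az + DF(z)`. -/
def IsRegSol {Z V X : Type*}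
    [NormedAddCommGroup Z] [InnerProductSpace ℝ Z]
    [NormedAddCommGroup V] [InnerProductSpace ℝ V]
    [NormedAddCommGroup X] [NormedSpace ℝ X]
    (jZV : Z →L[ℝ] V) (jVX : V →L[ℝ] X)
    (A : Z →L[ℝ] Z →L[ℝ] ℝ) (VV : V →L[ℝ] V →L[ℝ] ℝ) (R : X → ℝ)
    (DF : Z → V →L[ℝ] ℝ) (δ : ℝ) (lstar : V →L[ℝ] ℝ) (z₀ : Z)
    (z zd : ℝ → Z) : Prop :=
  z 0 = z₀ ∧
  (∃ K₁ : NNReal, LipschitzOnWith K₁ z (Set.Ici 0)) ∧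
  (∃ K₂ : NNReal, LipschitzOnWith K₂ zd (Set.Ici 0)) ∧
  (∀ t ≥ (0:ℝ), HasDerivWithinAt z (zd t) (Set.Ici 0) t) ∧
  (∀ t ≥ (0:ℝ), ∀ w : Z,
    R (jVX (jZV w)) + 1 / 2 * VV (jZV w) (jZV w) + δ / 2 * A w w ≥
      (R (jVX (jZV (zd t))) + 1 / 2 * VV (jZV (zd t)) (jZV (zd t))
        + δ / 2 * A (zd t) (zd t)) +
      (lstar (jZV (w - zd t))
        - (A (z t) (w - zd t) + DF (z t) (jZV (w - zd t)))))

/-!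
The potential `R_δ` is strongly convex, so `∂R_δ` has a single-valued Lipschitz inverse `G`, the
derivative of the convex conjugate of `R_δ`. The differential inclusion is therefore the ordinary
differential equation `ż = G(ℓ* − DI(z))`, whose right-hand side is Lipschitz on bounded sets.
Testing the inclusion with `w = 0` gives `R_δ(ż) ≤ -d/dt (I(z) − ⟨ℓ*,z⟩)`, so the energy
`I − ℓ*` is a Lyapunov function. It is coercive and does not involve `δ`: its sublevel sets are
bounded, which makes the solution global, and both its sublevel sets and its total decrease are
controlled by `‖z₀‖ + ‖ℓ*‖` alone, which gives the uniform bounds.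
-/

open Set Filter Topology Bornology
open scoped NNReal

section LipschitzOnBounded

/-- Lipschitz continuity on every bounded set, with a constant depending on the set. -/
def LipschitzOnBounded {α β : Type*} [PseudoMetricSpace α] [PseudoMetricSpace β]
    (f : α → β) : Prop :=
  ∀ s : Set α, IsBounded s → ∃ K : ℝ≥0, LipschitzOnWith K f s

namespace LipschitzOnBounded

section Metric

variable {α β γ : Type*} [PseudoMetricSpace α] [PseudoMetricSpace β] [PseudoMetricSpace γ]

theorem of_lipschitzWith {f : α → β} {K : ℝ≥0} (hf : LipschitzWith K f) :
    LipschitzOnBounded f :=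
  fun _ _ => ⟨K, hf.lipschitzOnWith⟩

theorem isBounded_image {f : α → β} (hf : LipschitzOnBounded f) {s : Set α} (hs : IsBounded s) :
    IsBounded (f '' s) := by
  obtain ⟨K, hK⟩ := hf s hs
  obtain ⟨C, hC⟩ := Metric.isBounded_iff.1 hs
  refine Metric.isBounded_iff.2 ⟨K * C, ?_⟩
  rintro _ ⟨x, hx, rfl⟩ _ ⟨y, hy, rfl⟩
  exact (hK.dist_le_mul x hx y hy).trans (by gcongr; exact hC hx hy)

theorem comp {g : β → γ} {f : α → β} (hg : LipschitzOnBounded g) (hf : LipschitzOnBounded f) :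
    LipschitzOnBounded (g ∘ f) := by
  intro s hs
  obtain ⟨Kf, hKf⟩ := hf s hs
  obtain ⟨Kg, hKg⟩ := hg _ (hf.isBounded_image hs)
  exact ⟨Kg * Kf, hKg.comp hKf (mapsTo_image f s)⟩

end Metric

section Normed

theorem add {α G : Type*} [PseudoMetricSpace α] [SeminormedAddCommGroup G] {f g : α → G}
    (hf : LipschitzOnBounded f) (hg : LipschitzOnBounded g) :
    LipschitzOnBounded fun x => f x + g x := by
  intro s hs
  obtain ⟨Kf, hKf⟩ := hf s hs
  obtain ⟨Kg, hKg⟩ := hg s hs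
  exact ⟨Kf + Kg, hKf.add hKg⟩

variable {E F : Type*} [NormedAddCommGroup E] [NormedSpace ℝ E]
  [NormedAddCommGroup F] [NormedSpace ℝ F]

theorem clm_comp_const {α G : Type*} [PseudoMetricSpace α] [NormedAddCommGroup G]
    [NormedSpace ℝ G] {T : α → F →L[ℝ] G} (hT : LipschitzOnBounded T) (j : E →L[ℝ] F) :
    LipschitzOnBounded fun x => (T x).comp j :=
  (of_lipschitzWith ((ContinuousLinearMap.compL ℝ E F G).flip j).lipschitz).comp hT

theorem of_hasFDerivAt {f : E → F} {f' : E → E →L[ℝ] F} (hf : ∀ x, HasFDerivAt f (f' x) x)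
    (hf' : ∀ s, IsBounded s → IsBounded (f' '' s)) : LipschitzOnBounded f := by
  intro s hs
  obtain ⟨r, hr⟩ := hs.subset_closedBall 0
  obtain ⟨C, hC⟩ := (hf' _ Metric.isBounded_closedBall).exists_norm_le
  refine ⟨C.toNNReal, LipschitzOnWith.mono ?_ hr⟩
  refine (convex_closedBall 0 r).lipschitzOnWith_of_nnnorm_hasFDerivWithin_le
    (fun x _ => (hf x).hasFDerivWithinAt) fun x hx => ?_
  exact NNReal.le_toNNReal_of_coe_le (hC _ (mem_image_of_mem f' hx))

end Normed

end LipschitzOnBounded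

theorem isBounded_image_of_norm_apply_le_rpow {E F G : Type*}
    [SeminormedAddCommGroup E] [SeminormedAddCommGroup F] [NormedSpace ℝ F]
    [SeminormedAddCommGroup G] [NormedSpace ℝ G]
    {T : E → F →L[ℝ] G} {C q : ℝ} (hC : 0 ≤ C) (hq : 0 ≤ q)
    (hT : ∀ x v, ‖T x v‖ ≤ C * (1 + ‖x‖ ^ q) * ‖v‖) {s : Set E} (hs : IsBounded s) :
    IsBounded (T '' s) := by
  obtain ⟨M, hM⟩ := hs.exists_norm_le
  refine isBounded_iff_forall_norm_le.2 ⟨C * (1 + M ^ q), ?_⟩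
  rintro _ ⟨x, hx, rfl⟩
  calc ‖T x‖ ≤ C * (1 + ‖x‖ ^ q) := (T x).opNorm_le_bound (by positivity) (hT x)
    _ ≤ C * (1 + M ^ q) := by gcongr; exact hM x hx

end LipschitzOnBounded

section Cutoff

theorem lipschitzWith_smul_of_eq_zero_of_notMem {α E : Type*} [PseudoMetricSpace α]
    [NormedAddCommGroup E] [NormedSpace ℝ E] {χ : α → ℝ} {g : α → E} {t : Set α}
    {Kχ Kg B : ℝ≥0} (hχ : LipschitzWith Kχ χ) (hχ_le : ∀ x, ‖χ x‖ ≤ 1)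
    (hχ_zero : ∀ x ∉ t, χ x = 0) (hg : LipschitzOnWith Kg g t) (hg_le : ∀ x ∈ t, ‖g x‖ ≤ B) :
    LipschitzWith (Kg + Kχ * B) fun x => χ x • g x := by
  refine LipschitzWith.of_dist_le_mul fun x y => ?_
  wlog hx : x ∈ t generalizing x y
  · by_cases hy : y ∈ t
    · rw [dist_comm, dist_comm x]
      exact this y x hy
    · simp only [hχ_zero x hx, hχ_zero y hy, zero_smul, dist_self]
      positivity
  have variation_cutoff : ‖(χ x - χ y) • g x‖ ≤ Kχ * B * dist x y :=
    calc ‖(χ x - χ y) • g x‖ = dist (χ x) (χ y) * ‖g x‖ := by rw [norm_smul, dist_eq_norm]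
      _ ≤ Kχ * dist x y * B := by gcongr; exacts [hχ.dist_le_mul x y, hg_le x hx]
      _ = Kχ * B * dist x y := by ring
  have variation_field : ‖χ y • (g x - g y)‖ ≤ Kg * dist x y := by
    by_cases hy : y ∈ t
    · calc ‖χ y • (g x - g y)‖ = ‖χ y‖ * dist (g x) (g y) := by rw [norm_smul, dist_eq_norm]
        _ ≤ 1 * (Kg * dist x y) := by gcongr; exacts [hχ_le y, hg.dist_le_mul x hx y hy]
        _ = Kg * dist x y := one_mul _
    · rw [hχ_zero y hy, zero_smul, norm_zero]
      positivity
  calc dist (χ x • g x) (χ y • g y) = ‖χ y • (g x - g y) + (χ x - χ y) • g x‖ := by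
        rw [dist_eq_norm]; congr 1; module
    _ ≤ Kg * dist x y + Kχ * B * dist x y :=
        (norm_add_le _ _).trans (add_le_add variation_field variation_cutoff)
    _ = (Kg + Kχ * B : ℝ≥0) * dist x y := by push_cast; ring

theorem LipschitzOnBounded.exists_cutoff {α E : Type*} [PseudoMetricSpace α]
    [NormedAddCommGroup E] [NormedSpace ℝ E] {g : α → E} (hg : LipschitzOnBounded g)
    {s : Set α} (hs : IsBounded s) :
    ∃ χ : α → ℝ, (∀ x, 0 ≤ χ x) ∧ (∀ x ∈ s, χ x = 1) ∧
      (∃ K, LipschitzWith K fun x => χ x • g x) ∧ ∃ L : ℝ≥0, ∀ x, ‖χ x • g x‖ ≤ L := by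
  let χ : α → ℝ := fun x => thickenedIndicator one_pos s x
  have hχ_le : ∀ x, ‖χ x‖ ≤ 1 := fun x => by
    simpa [χ] using thickenedIndicator_le_one one_pos s x
  have hχ_zero : ∀ x ∉ Metric.thickening 1 s, χ x = 0 := fun x hx => by
    simp only [χ, thickenedIndicator_zero one_pos s hx, NNReal.coe_zero]
  have hχ_one : ∀ x ∈ s, χ x = 1 := fun x hx => by
    simp only [χ, thickenedIndicator_one one_pos s hx, NNReal.coe_one]
  have hχ : LipschitzWith (1 * (1 : ℝ).toNNReal⁻¹) χ :=
    (LipschitzWith.subtype_val _).comp (lipschitzWith_thickenedIndicator one_pos s)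
  have ht : IsBounded (Metric.thickening 1 s) := hs.thickening
  obtain ⟨K, hK⟩ := hg _ ht
  obtain ⟨B, hB, hgB⟩ := (hg.isBounded_image ht).exists_pos_norm_le
  lift B to ℝ≥0 using hB.le
  rw [forall_mem_image] at hgB
  refine ⟨χ, fun x => NNReal.coe_nonneg _, hχ_one,
    ⟨_, lipschitzWith_smul_of_eq_zero_of_notMem hχ hχ_le hχ_zero hK hgB⟩, B, fun x => ?_⟩
  by_cases hx : x ∈ Metric.thickening 1 s
  · calc ‖χ x • g x‖ = ‖χ x‖ * ‖g x‖ := norm_smul _ _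
      _ ≤ 1 * B := by gcongr; exacts [hχ_le x, hgB hx]
      _ = B := one_mul _
  · simp [hχ_zero x hx]

end Cutoff

section GlobalExistence

variable {E : Type*} [NormedAddCommGroup E] [NormedSpace ℝ E]

theorem exists_isIntegralCurve_of_lipschitzWith_of_norm_le [CompleteSpace E] {g : E → E}
    {K L : ℝ≥0} (hg : LipschitzWith K g) (hL : ∀ x, ‖g x‖ ≤ L) (x₀ : E) :
    ∃ γ : ℝ → E, γ 0 = x₀ ∧ IsIntegralCurve γ fun _ => g := by
  have exists_on_Ioo : ∀ n : ℕ, ∃ γ : ℝ → E, γ 0 = x₀ ∧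
      ∀ t ∈ Ioo (-n : ℝ) n, HasDerivAt γ (g (γ t)) t := by
    intro n
    have hpl : IsPicardLindelof (fun _ => g) (tmin := -n) (tmax := n)
        ⟨0, by simp⟩ x₀ (L * n) 0 L K :=
      .of_time_independent (fun x _ => hL x) hg.lipschitzOnWith (by simp)
    obtain ⟨γ, h0, hγ⟩ := hpl.exists_eq_forall_mem_Icc_hasDerivWithinAt₀
    exact ⟨γ, h0, fun t ht => (hγ t (Ioo_subset_Icc_self ht)).hasDerivAt (Icc_mem_nhds ht.1 ht.2)⟩
  choose γ h0 hγ using exists_on_Ioo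
  have eqOn_of_le : ∀ {m n : ℕ}, m ≤ n → EqOn (γ m) (γ n) (Ioo (-m : ℝ) m) := by
    intro m n hmn t ht
    have hmn' : (m : ℝ) ≤ n := mod_cast hmn
    exact ODE_solution_unique_of_mem_Ioo (v := fun _ => g) (s := fun _ => univ) (K := K)
      (fun _ _ => hg.lipschitzOnWith) ⟨by linarith [ht.1, ht.2], by linarith [ht.1, ht.2]⟩
      (fun s hs => ⟨hγ m s hs, mem_univ _⟩)
      (fun s hs => ⟨hγ n s (Ioo_subset_Ioo (neg_le_neg hmn') hmn' hs), mem_univ _⟩)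
      ((h0 m).trans (h0 n).symm) ht
  have mem_Ioo_index : ∀ t : ℝ, t ∈ Ioo (-(⌊|t|⌋₊ + 1 : ℕ) : ℝ) (⌊|t|⌋₊ + 1 : ℕ) := fun t =>
    abs_lt.1 (mod_cast Nat.lt_floor_add_one |t|)
  have glued_eqOn : ∀ n : ℕ, EqOn (fun t => γ (⌊|t|⌋₊ + 1) t) (γ n) (Ioo (-n : ℝ) n) := by
    intro n t ht
    rcases le_total (⌊|t|⌋₊ + 1) n with h | h
    · exact eqOn_of_le h (mem_Ioo_index t)
    · exact (eqOn_of_le h ht).symm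
  refine ⟨fun t => γ (⌊|t|⌋₊ + 1) t, h0 _, fun t => ?_⟩
  have ht := mem_Ioo_index t
  exact (hγ _ t ht).congr_of_eventuallyEq
    ((glued_eqOn _).eventuallyEq_of_mem (Ioo_mem_nhds ht.1 ht.2))

theorem antitoneOn_comp_of_hasFDerivAt_nonpos {f : E → ℝ} {f' : E → E →L[ℝ] ℝ}
    (hf : ∀ x, HasFDerivAt f (f' x) x) {D : Set ℝ} (hD : Convex ℝ D) {γ γ' : ℝ → E}
    (hγ : ∀ t ∈ D, HasDerivWithinAt γ (γ' t) D t) (hle : ∀ t ∈ D, f' (γ t) (γ' t) ≤ 0) :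
    AntitoneOn (f ∘ γ) D := by
  have hderiv : ∀ t ∈ D, HasDerivWithinAt (f ∘ γ) (f' (γ t) (γ' t)) D t := fun t ht =>
    (hf (γ t)).comp_hasDerivWithinAt t (hγ t ht)
  exact antitoneOn_of_hasDerivWithinAt_nonpos hD (HasDerivWithinAt.continuousOn hderiv)
    (fun t ht => (hderiv t (interior_subset ht)).mono interior_subset)
    fun t ht => hle t (interior_subset ht)

-- Cutting `g` off by a nonnegative scalar keeps `f` a Lyapunov function, so the solution of the
-- truncated equation never reaches the region where the truncation is active.
theorem LipschitzOnBounded.exists_hasDerivWithinAt_of_lyapunov [CompleteSpace E] {g : E → E}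
    (hg : LipschitzOnBounded g) {f : E → ℝ} {f' : E → E →L[ℝ] ℝ}
    (hf : ∀ x, HasFDerivAt f (f' x) x) (hle : ∀ x, f' x (g x) ≤ 0) {x₀ : E}
    (hbdd : IsBounded {x | f x ≤ f x₀}) :
    ∃ γ : ℝ → E, γ 0 = x₀ ∧ (∀ t ∈ Ici 0, HasDerivWithinAt γ (g (γ t)) (Ici 0) t) ∧
      ∀ t ∈ Ici 0, f (γ t) ≤ f x₀ := by
  obtain ⟨χ, hχ_nonneg, hχ_one, ⟨K, hK⟩, L, hL⟩ := hg.exists_cutoff hbdd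
  obtain ⟨γ, h0, hγ⟩ := exists_isIntegralCurve_of_lipschitzWith_of_norm_le hK hL x₀
  have hanti : AntitoneOn (f ∘ γ) (Ici 0) :=
    antitoneOn_comp_of_hasFDerivAt_nonpos hf (convex_Ici 0)
      (fun t _ => (hγ t).hasDerivWithinAt) fun t _ => by
        rw [map_smul]
        exact smul_nonpos_of_nonneg_of_nonpos (hχ_nonneg _) (hle _)
  have hmem : ∀ t ∈ Ici (0 : ℝ), f (γ t) ≤ f x₀ := fun t ht => by
    simpa only [Function.comp_apply, h0] using hanti self_mem_Ici ht ht
  refine ⟨γ, h0, fun t ht => ?_, hmem⟩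
  simpa only [hχ_one _ (hmem t ht), one_smul] using (hγ t).hasDerivWithinAt

end GlobalExistence

section Subgradient

variable {E : Type*} [NormedAddCommGroup E] [NormedSpace ℝ E]

/-- `ξ` belongs to the subdifferential `∂ψ(u)` of convex analysis. -/
def IsSubgradient (ψ : E → ℝ) (ξ : E →L[ℝ] ℝ) (u : E) : Prop :=
  ∀ w, ψ u + ξ (w - u) ≤ ψ w

theorem IsSubgradient.le_add_apply {ψ : E → ℝ} {ξ : E →L[ℝ] ℝ} {u : E}
    (h : IsSubgradient ψ ξ u) : ψ u ≤ ψ 0 + ξ u := by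
  have := h 0
  rw [zero_sub, map_neg] at this
  linarith

theorem IsSubgradient.add_sq_norm_le {ψ : E → ℝ} {m : ℝ} (hψ : StrongConvexOn univ m ψ)
    {ξ : E →L[ℝ] ℝ} {u : E} (h : IsSubgradient ψ ξ u) (w : E) :
    ψ u + ξ (w - u) + m / 2 * ‖w - u‖ ^ 2 ≤ ψ w := by
  have hsegment : ∀ t ∈ Ioo (0 : ℝ) 1,
      ψ u + ξ (w - u) + (1 - t) * (m / 2 * ‖w - u‖ ^ 2) ≤ ψ w := by
    intro t ht
    have hsub := h ((1 - t) • u + t • w)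
    have hconv := hψ.2 (mem_univ u) (mem_univ w) (sub_nonneg.2 ht.2.le) ht.1.le
      (sub_add_cancel 1 t)
    rw [show (1 - t) • u + t • w - u = t • (w - u) by module, map_smul] at hsub
    rw [norm_sub_rev] at hconv
    simp only [smul_eq_mul] at hsub hconv
    refine le_of_mul_le_mul_left ?_ ht.1
    linarith
  have hlim : Tendsto (fun t : ℝ => ψ u + ξ (w - u) + (1 - t) * (m / 2 * ‖w - u‖ ^ 2))
      (𝓝[>] 0) (𝓝 (ψ u + ξ (w - u) + m / 2 * ‖w - u‖ ^ 2)) := by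
    refine tendsto_nhdsWithin_of_tendsto_nhds (Continuous.tendsto' (by fun_prop) _ _ ?_)
    ring
  exact le_of_tendsto hlim (eventually_of_mem (Ioo_mem_nhdsGT one_pos) hsegment)

theorem IsSubgradient.norm_sub_le {ψ : E → ℝ} {m : ℝ} (hψ : StrongConvexOn univ m ψ)
    (hm : 0 < m) {ξ η : E →L[ℝ] ℝ} {u v : E} (hu : IsSubgradient ψ ξ u)
    (hv : IsSubgradient ψ η v) : ‖u - v‖ ≤ m⁻¹ * ‖ξ - η‖ := by
  have hmono : m * ‖u - v‖ ^ 2 ≤ (ξ - η) (u - v) := by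
    have huv := hu.add_sq_norm_le hψ v
    have hvu := hv.add_sq_norm_le hψ u
    rw [← neg_sub u v, map_neg, norm_neg] at huv
    rw [sub_apply]
    linarith
  have hle : m * ‖u - v‖ * ‖u - v‖ ≤ ‖ξ - η‖ * ‖u - v‖ :=
    calc m * ‖u - v‖ * ‖u - v‖ = m * ‖u - v‖ ^ 2 := by ring
      _ ≤ ‖ξ - η‖ * ‖u - v‖ := hmono.trans ((le_abs_self _).trans ((ξ - η).le_opNorm _))
  rw [le_inv_mul_iff₀ hm]
  rcases (norm_nonneg (u - v)).eq_or_lt with h | h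
  · rw [← h, mul_zero]
    positivity
  · exact le_of_mul_le_mul_right hle h

theorem sq_norm_sub_le_of_strongConvexOn_of_forall_le {f : E → ℝ} {m b : ℝ}
    (hf : StrongConvexOn univ m f) (hb : ∀ x, b ≤ f x) (x y : E) :
    m / 4 * ‖x - y‖ ^ 2 ≤ (f x - b) + (f y - b) := by
  have hmid := hf.2 (mem_univ x) (mem_univ y) (one_half_pos (α := ℝ)).le one_half_pos.le
    (add_halves 1)
  have hlow := hb ((1 / 2 : ℝ) • x + (1 / 2 : ℝ) • y)
  simp only [smul_eq_mul] at hmid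
  linarith

theorem exists_forall_le_of_strongConvexOn [CompleteSpace E] {f : E → ℝ} {m : ℝ}
    (hf : StrongConvexOn univ m f) (hm : 0 < m) (hlsc : LowerSemicontinuous f)
    (hbdd : BddBelow (range f)) : ∃ x, ∀ y, f x ≤ f y := by
  obtain ⟨v, hv_anti, hv_lim, hv_mem⟩ := exists_seq_tendsto_sInf (range_nonempty f) hbdd
  choose u hu using hv_mem
  have hinf : ∀ x, sInf (range f) ≤ f x := fun x => csInf_le hbdd (mem_range_self x)
  have hcauchy : CauchySeq u := by
    refine cauchySeq_of_le_tendsto_0' (fun n => √(8 / m * (v n - sInf (range f)))) ?_ ?_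
    · intro n k hnk
      have hdist := sq_norm_sub_le_of_strongConvexOn_of_forall_le hf hinf (u n) (u k)
      have hvk : v k ≤ v n := hv_anti hnk
      rw [hu, hu] at hdist
      rw [dist_eq_norm]
      refine Real.le_sqrt_of_sq_le ?_
      rw [div_mul_eq_mul_div, le_div_iff₀ hm]
      linarith
    · simpa using ((hv_lim.sub_const (sInf (range f))).const_mul (8 / m)).sqrt
  obtain ⟨x, hx⟩ := cauchySeq_tendsto_of_complete hcauchy
  have hx_le : ∀ n, f x ≤ v n := fun n =>
    (hlsc.isClosed_preimage (v n)).mem_of_tendsto hx <|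
      eventually_atTop.2 ⟨n, fun k hnk => (hu k).trans_le (hv_anti hnk)⟩
  exact ⟨x, fun y => (ge_of_tendsto' hv_lim hx_le).trans (hinf y)⟩

theorem exists_isSubgradient [CompleteSpace E] {ψ : E → ℝ} {m : ℝ}
    (hψ : StrongConvexOn univ m ψ) (hm : 0 < m) (hlsc : LowerSemicontinuous ψ)
    (hbdd : BddBelow (range ψ)) (ξ : E →L[ℝ] ℝ) : ∃ u, IsSubgradient ψ ξ u := by
  have htilt : StrongConvexOn univ m (ψ + ⇑(-ξ)) := by
    simpa [StrongConvexOn] using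
      hψ.add (uniformConvexOn_zero.2 ((-ξ).toLinearMap.convexOn convex_univ))
  have htilt_bdd : BddBelow (range (ψ + ⇑(-ξ))) := by
    obtain ⟨b, hb⟩ := hbdd
    rw [mem_lowerBounds, forall_mem_range] at hb
    refine ⟨2 * b - ψ 0 - ‖ξ‖ ^ 2 / m, ?_⟩
    rintro _ ⟨w, rfl⟩
    have hgrowth := sq_norm_sub_le_of_strongConvexOn_of_forall_le hψ hb w 0
    have hξ : ξ w ≤ ‖ξ‖ * ‖w‖ := (le_abs_self _).trans (ξ.le_opNorm w)
    have hyoung : 0 ≤ m / 4 * ‖w‖ ^ 2 - ‖ξ‖ * ‖w‖ + ‖ξ‖ ^ 2 / m :=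
      calc 0 ≤ (m / 2 * ‖w‖ - ‖ξ‖) ^ 2 / m := by positivity
        _ = _ := by field
    rw [sub_zero] at hgrowth
    simp only [Pi.add_apply, neg_apply]
    linarith
  obtain ⟨u, hu⟩ := exists_forall_le_of_strongConvexOn htilt hm
    (hlsc.add (-ξ).continuous.lowerSemicontinuous) htilt_bdd
  refine ⟨u, fun w => ?_⟩
  have := hu w
  simp only [Pi.add_apply, neg_apply] at this
  rw [map_sub]
  linarith

-- The selection is the derivative of the convex conjugate of `ψ`.
theorem exists_lipschitzWith_isSubgradient [CompleteSpace E] {ψ : E → ℝ} {m : ℝ}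
    (hψ : StrongConvexOn univ m ψ) (hm : 0 < m) (hlsc : LowerSemicontinuous ψ)
    (hbdd : BddBelow (range ψ)) :
    ∃ G : (E →L[ℝ] ℝ) → E, LipschitzWith m⁻¹.toNNReal G ∧ ∀ ξ, IsSubgradient ψ ξ (G ξ) := by
  choose G hG using exists_isSubgradient hψ hm hlsc hbdd
  refine ⟨G, LipschitzWith.of_dist_le' fun ξ η => ?_, hG⟩
  rw [dist_eq_norm, dist_eq_norm]
  exact (hG ξ).norm_sub_le hψ hm (hG η)

theorem strongConvexOn_add_half_bilin {r : E → ℝ} (hr : ConvexOn ℝ univ r)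
    {B : E →L[ℝ] E →L[ℝ] ℝ} {m : ℝ} (hB : ∀ x, m * ‖x‖ ^ 2 ≤ B x x) :
    StrongConvexOn univ m fun x => r x + 1 / 2 * B x x := by
  refine ⟨convex_univ, fun x _ y _ a b ha hb hab => ?_⟩
  have hr' := hr.2 (mem_univ x) (mem_univ y) ha hb hab
  have hpolar : B (a • x + b • y) (a • x + b • y)
      = a * B x x + b * B y y - a * b * B (x - y) (x - y) := by
    obtain rfl : a = 1 - b := by linarith
    simp only [map_add, map_sub, map_smul, add_apply, sub_apply, smul_apply, smul_eq_mul]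
    ring
  have hB' := mul_le_mul_of_nonneg_left (hB (x - y)) (mul_nonneg ha hb)
  simp only [smul_eq_mul] at hr' ⊢
  linarith

end Subgradient

section GradientFlow

theorem lintegral_Ioi_ofReal_le_of_forall_intervalIntegral_le {h : ℝ → ℝ} {a D : ℝ}
    (hint : ∀ T, a ≤ T → IntervalIntegrable h volume a T) (hnonneg : ∀ t ∈ Ioi a, 0 ≤ h t)
    (hD : ∀ T, a ≤ T → ∫ t in a..T, h t ≤ D) :
    ∫⁻ t in Ioi a, ENNReal.ofReal (h t) ≤ ENNReal.ofReal D := by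
  have hcover : ⋃ n : ℕ, Ioc a (a + n) = Ioi a :=
    iUnion_Ioc_eq_Ioi_self_iff.2 fun x _ => by
      obtain ⟨n, hn⟩ := exists_nat_ge (x - a)
      exact ⟨n, by linarith⟩
  have hmono : Monotone fun n : ℕ => Ioc a (a + n) := fun m n hmn =>
    Ioc_subset_Ioc_right (by gcongr)
  rw [← hcover, setLIntegral_iUnion_of_directed _ hmono.directed_le]
  refine iSup_le fun n => ?_
  have hn : a ≤ a + n := by simp
  have hnonneg_ae : 0 ≤ᵐ[volume.restrict (Ioc a (a + n))] h :=
    ae_restrict_of_forall_mem measurableSet_Ioc fun t ht => hnonneg t ht.1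
  rw [← ofReal_integral_eq_lintegral_ofReal (hint _ hn).1 hnonneg_ae,
    ← intervalIntegral.integral_of_le hn]
  exact ENNReal.ofReal_le_ofReal (hD _ hn)

variable {E : Type*} [NormedAddCommGroup E] [NormedSpace ℝ E]
  {ψ f : E → ℝ} {f' : E → E →L[ℝ] ℝ} {z zd : ℝ → E}

/-- The pair `z`, `zd = ż` solves the generalized gradient flow `0 ∈ ∂ψ(ż(t)) + f'(z(t))` on
`[0,∞)`, for a dissipation potential `ψ` and the derivative `f'` of an energy. The derivative at
`t = 0` is one-sided. -/
structure IsGradientFlow (ψ : E → ℝ) (f' : E → E →L[ℝ] ℝ) (z zd : ℝ → E) : Prop where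
  hasDerivWithinAt : ∀ t ∈ Ici (0 : ℝ), HasDerivWithinAt z (zd t) (Ici 0) t
  isSubgradient : ∀ t ∈ Ici (0 : ℝ), IsSubgradient ψ (-f' (z t)) (zd t)

namespace IsGradientFlow

theorem continuousOn (h : IsGradientFlow ψ f' z zd) : ContinuousOn z (Ici 0) :=
  HasDerivWithinAt.continuousOn h.hasDerivWithinAt

theorem dissipation_le (h : IsGradientFlow ψ f' z zd) (hψ_zero : ψ 0 = 0) {t : ℝ}
    (ht : t ∈ Ici 0) : ψ (zd t) ≤ -f' (z t) (zd t) := by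
  simpa only [hψ_zero, zero_add, neg_apply] using (h.isSubgradient t ht).le_add_apply

theorem antitoneOn_energy (h : IsGradientFlow ψ f' z zd) (hf : ∀ x, HasFDerivAt f (f' x) x)
    (hψ_zero : ψ 0 = 0) (hψ_nonneg : ∀ x, 0 ≤ ψ x) : AntitoneOn (f ∘ z) (Ici 0) :=
  antitoneOn_comp_of_hasFDerivAt_nonpos hf (convex_Ici 0) h.hasDerivWithinAt fun t ht =>
    neg_nonneg.1 ((hψ_nonneg (zd t)).trans (h.dissipation_le hψ_zero ht))

theorem integral_dissipation_le (h : IsGradientFlow ψ f' z zd)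
    (hf : ∀ x, HasFDerivAt f (f' x) x) (hψ_zero : ψ 0 = 0)
    (hcont : ContinuousOn (fun t => ψ (zd t)) (Ici 0)) {T : ℝ} (hT : 0 ≤ T) :
    ∫ t in (0 : ℝ)..T, ψ (zd t) ≤ f (z 0) - f (z T) := by
  have hderiv : ∀ t ∈ Ici (0 : ℝ),
      HasDerivWithinAt (fun t => -f (z t)) (-f' (z t) (zd t)) (Ici 0) t := fun t ht =>
    ((hf (z t)).comp_hasDerivWithinAt t (h.hasDerivWithinAt t ht)).neg
  have hIcc : Icc 0 T ⊆ Ici 0 := Icc_subset_Ici_self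
  calc ∫ t in (0 : ℝ)..T, ψ (zd t) ≤ -f (z T) - -f (z 0) :=
        intervalIntegral.integral_le_sub_of_hasDeriv_right_of_le hT
          ((HasDerivWithinAt.continuousOn hderiv).mono hIcc)
          (fun t ht => (hderiv t ht.1.le).mono (Ioi_subset_Ici ht.1.le))
          (hcont.mono hIcc).integrableOn_Icc fun t ht => h.dissipation_le hψ_zero ht.1.le
    _ = f (z 0) - f (z T) := by ring

theorem lintegral_dissipation_le (h : IsGradientFlow ψ f' z zd)
    (hf : ∀ x, HasFDerivAt f (f' x) x) (hψ_zero : ψ 0 = 0) (hψ_nonneg : ∀ x, 0 ≤ ψ x)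
    (hcont : ContinuousOn (fun t => ψ (zd t)) (Ici 0)) {D : ℝ}
    (hD : ∀ t ∈ Ici (0 : ℝ), f (z 0) - f (z t) ≤ D) :
    ∫⁻ t in Ioi (0 : ℝ), ENNReal.ofReal (ψ (zd t)) ≤ ENNReal.ofReal D := by
  refine lintegral_Ioi_ofReal_le_of_forall_intervalIntegral_le (fun T hT => ?_)
    (fun t _ => hψ_nonneg _) fun T hT =>
      (h.integral_dissipation_le hf hψ_zero hcont hT).trans (hD T hT)
  exact (hcont.mono Icc_subset_Ici_self).intervalIntegrable_of_Icc hT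

variable [CompleteSpace E] {m : ℝ}

theorem eqOn (hψ : StrongConvexOn univ m ψ) (hm : 0 < m) (hlsc : LowerSemicontinuous ψ)
    (hbdd : BddBelow (range ψ)) (hf' : LipschitzOnBounded f') {y yd : ℝ → E}
    (hz : IsGradientFlow ψ f' z zd) (hy : IsGradientFlow ψ f' y yd) (h0 : z 0 = y 0) :
    EqOn z y (Ici 0) := by
  obtain ⟨G, hG_lip, hG⟩ := exists_lipschitzWith_isSubgradient hψ hm hlsc hbdd
  have hasDeriv_ode : ∀ {x xd : ℝ → E}, IsGradientFlow ψ f' x xd → ∀ t ∈ Ici (0 : ℝ),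
      HasDerivWithinAt x (G (-f' (x t))) (Ici t) t := by
    intro x xd hx t ht
    have hxd : xd t = G (-f' (x t)) := by
      have := (hx.isSubgradient t ht).norm_sub_le hψ hm (hG (-f' (x t)))
      rwa [sub_self, norm_zero, mul_zero, norm_le_zero_iff, sub_eq_zero] at this
    exact hxd ▸ (hx.hasDerivWithinAt t ht).mono (Ici_subset_Ici.2 ht)
  intro T hT
  have hIcc : Icc 0 T ⊆ Ici 0 := Icc_subset_Ici_self
  have hzc := hz.continuousOn.mono hIcc
  have hyc := hy.continuousOn.mono hIcc
  obtain ⟨K, hK⟩ := hf' (z '' Icc 0 T ∪ y '' Icc 0 T)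
    ((isCompact_Icc.image_of_continuousOn hzc).isBounded.union
      (isCompact_Icc.image_of_continuousOn hyc).isBounded)
  exact ODE_solution_unique_of_mem_Icc_right (v := fun _ x => G (-f' x))
    (fun _ _ => hG_lip.comp_lipschitzOnWith hK.neg)
    hzc (fun t ht => hasDeriv_ode hz t ht.1)
    (fun t ht => .inl (mem_image_of_mem z (Ico_subset_Icc_self ht)))
    hyc (fun t ht => hasDeriv_ode hy t ht.1)
    (fun t ht => .inr (mem_image_of_mem y (Ico_subset_Icc_self ht))) h0 ⟨hT, le_rfl⟩

end IsGradientFlow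

theorem exists_isGradientFlow [CompleteSpace E] {m : ℝ} (hψ : StrongConvexOn univ m ψ)
    (hm : 0 < m) (hlsc : LowerSemicontinuous ψ) (hψ_zero : ψ 0 = 0) (hψ_nonneg : ∀ x, 0 ≤ ψ x)
    (hf : ∀ x, HasFDerivAt f (f' x) x) (hf' : LipschitzOnBounded f') {x₀ : E}
    (hbdd : IsBounded {x | f x ≤ f x₀}) :
    ∃ z zd : ℝ → E, z 0 = x₀ ∧ (∃ K, LipschitzOnWith K z (Ici 0)) ∧
      (∃ K, LipschitzOnWith K zd (Ici 0)) ∧ IsGradientFlow ψ f' z zd := by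
  obtain ⟨G, hG_lip, hG⟩ := exists_lipschitzWith_isSubgradient hψ hm hlsc
    ⟨0, forall_mem_range.2 hψ_nonneg⟩
  let g : E → E := fun x => G (-f' x)
  have hg : LipschitzOnBounded g := fun s hs =>
    let ⟨K, hK⟩ := hf' s hs
    ⟨_, hG_lip.comp_lipschitzOnWith hK.neg⟩
  have hle : ∀ x, f' x (g x) ≤ 0 := fun x => by
    have := (hψ_nonneg (g x)).trans (hG (-f' x)).le_add_apply
    rw [hψ_zero, neg_apply] at this
    linarith
  obtain ⟨z, h0, hz, hmem⟩ := hg.exists_hasDerivWithinAt_of_lyapunov hf hle hbdd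
  obtain ⟨B, hB_nonneg, hB⟩ := (hg.isBounded_image hbdd).exists_pos_norm_le
  obtain ⟨K, hK⟩ := hg _ hbdd
  lift B to ℝ≥0 using hB_nonneg.le
  have hz_lip : LipschitzOnWith B z (Ici 0) :=
    (convex_Ici 0).lipschitzOnWith_of_nnnorm_hasDerivWithin_le hz fun t ht =>
      hB _ (mem_image_of_mem g (hmem t ht))
  exact ⟨z, g ∘ z, h0, ⟨B, hz_lip⟩, ⟨K * B, hK.comp hz_lip hmem⟩, hz, fun t _ => hG _⟩

end GradientFlow

section RegularizedSystem

variable {Z V X : Type*} [NormedAddCommGroup Z] [NormedAddCommGroup V] [NormedAddCommGroup X]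

section Dissipation

variable [NormedSpace ℝ Z] [NormedSpace ℝ V] [NormedSpace ℝ X]
  {jZV : Z →L[ℝ] V} {jVX : V →L[ℝ] X} {A : Z →L[ℝ] Z →L[ℝ] ℝ} {VV : V →L[ℝ] V →L[ℝ] ℝ}
  {R : X → ℝ} {α δ : ℝ}

/-- The regularized dissipation potential `R_δ(w) = R(w) + ½⟨𝕍w,w⟩ + (δ/2)⟨Aw,w⟩` on `Z`, with
the embeddings `Z → V → X` written out. -/
noncomputable def regDissipation (jZV : Z →L[ℝ] V) (jVX : V →L[ℝ] X) (A : Z →L[ℝ] Z →L[ℝ] ℝ)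
    (VV : V →L[ℝ] V →L[ℝ] ℝ) (R : X → ℝ) (δ : ℝ) (w : Z) : ℝ :=
  R (jVX (jZV w)) + 1 / 2 * VV (jZV w) (jZV w) + δ / 2 * A w w

theorem regDissipation_zero (hR_zero : R 0 = 0) :
    regDissipation jZV jVX A VV R δ 0 = 0 := by
  simp [regDissipation, hR_zero]

theorem regDissipation_nonneg (hδ : 0 ≤ δ) (hA : ∀ z, 0 ≤ A z z) (hVV : ∀ v, 0 ≤ VV v v)
    (hR : ∀ x, 0 ≤ R x) (w : Z) : 0 ≤ regDissipation jZV jVX A VV R δ w := by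
  have hRw := hR (jVX (jZV w))
  have hVVw := hVV (jZV w)
  have hAw := hA w
  unfold regDissipation
  positivity

theorem continuous_regDissipation (hR : Continuous R) :
    Continuous (regDissipation jZV jVX A VV R δ) := by
  unfold regDissipation
  fun_prop

theorem strongConvexOn_regDissipation (hδ : 0 ≤ δ) (hA : ∀ z, α * ‖z‖ ^ 2 ≤ A z z)
    (hVV : ∀ v, 0 ≤ VV v v) (hR : ConvexOn ℝ univ R) :
    StrongConvexOn univ (δ * α) (regDissipation jZV jVX A VV R δ) := by
  have hRZ : ConvexOn ℝ univ fun w => R (jVX (jZV w)) :=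
    hR.comp_linearMap (jVX.comp jZV).toLinearMap
  have hB : ∀ w, δ * α * ‖w‖ ^ 2 ≤ (VV.bilinearComp jZV jZV + δ • A) w w := fun w =>
    calc δ * α * ‖w‖ ^ 2 = 0 + δ * (α * ‖w‖ ^ 2) := by ring
      _ ≤ VV (jZV w) (jZV w) + δ * A w w := by gcongr; exacts [hVV _, hA w]
  convert strongConvexOn_add_half_bilin hRZ hB using 2 with w
  simp only [regDissipation, add_apply, smul_apply, smul_eq_mul,
    ContinuousLinearMap.bilinearComp_apply]
  ring

end Dissipation

section Energy

variable [NormedSpace ℝ Z] [NormedSpace ℝ V]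
  {jZV : Z →L[ℝ] V} {A : Z →L[ℝ] Z →L[ℝ] ℝ} {F : Z → ℝ} {DF : Z → V →L[ℝ] ℝ}
  {l : V →L[ℝ] ℝ} {α : ℝ}

/-- The energy `I(z) − ⟨ℓ*,z⟩`, with `I(z) = ½⟨Az,z⟩ + F(z)`: its gradient flow with respect to
`R_δ` is the regularized system. -/
noncomputable def tiltedEnergy (jZV : Z →L[ℝ] V) (A : Z →L[ℝ] Z →L[ℝ] ℝ) (F : Z → ℝ) (l : V →L[ℝ] ℝ)
    (z : Z) : ℝ :=
  1 / 2 * A z z + F z - l (jZV z)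

/-- The derivative `DI(z) − ℓ* = Az + DF(z) − ℓ*` of the tilted energy, as a functional on
`Z`. -/
noncomputable def tiltedEnergyDeriv (jZV : Z →L[ℝ] V) (A : Z →L[ℝ] Z →L[ℝ] ℝ) (DF : Z → V →L[ℝ] ℝ)
    (l : V →L[ℝ] ℝ) (z : Z) : Z →L[ℝ] ℝ :=
  A z + (DF z - l).comp jZV

theorem hasFDerivAt_tiltedEnergy (hA_symm : ∀ z w, A z w = A w z)
    (hDF : ∀ z, HasFDerivAt F ((DF z).comp jZV) z) (z : Z) :
    HasFDerivAt (tiltedEnergy jZV A F l) (tiltedEnergyDeriv jZV A DF l z) z := by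
  have hquad : HasFDerivAt (fun z => 1 / 2 * A z z) (A z) z := by
    refine ((A.hasFDerivAt.clm_apply (hasFDerivAt_id z)).const_mul (1 / 2)).congr_fderiv ?_
    ext w
    simp [hA_symm w z]
    ring
  refine ((hquad.add (hDF z)).sub (l.comp jZV).hasFDerivAt).congr_fderiv ?_
  rw [tiltedEnergyDeriv, ContinuousLinearMap.sub_comp, add_sub_assoc]

theorem lipschitzOnBounded_tiltedEnergyDeriv (hDF : LipschitzOnBounded DF) :
    LipschitzOnBounded (tiltedEnergyDeriv jZV A DF l) :=
  have hDF_sub : LipschitzOnBounded fun z => DF z - l :=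
    (LipschitzOnBounded.of_lipschitzWith (IsometryEquiv.subRight l).isometry.lipschitz).comp hDF
  (LipschitzOnBounded.of_lipschitzWith A.lipschitz).add (hDF_sub.clm_comp_const jZV)

theorem mul_sq_norm_le_tiltedEnergy_add (hα : 0 < α) (hA_ell : ∀ z, α * ‖z‖ ^ 2 ≤ A z z)
    (hF_nonneg : ∀ z, 0 ≤ F z) (z : Z) :
    α / 4 * ‖z‖ ^ 2 ≤ tiltedEnergy jZV A F l z + (‖l‖ * ‖jZV‖) ^ 2 / α := by
  have hload : l (jZV z) ≤ ‖l‖ * ‖jZV‖ * ‖z‖ :=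
    calc l (jZV z) ≤ ‖(l.comp jZV) z‖ := le_abs_self _
      _ ≤ ‖l.comp jZV‖ * ‖z‖ := (l.comp jZV).le_opNorm z
      _ ≤ ‖l‖ * ‖jZV‖ * ‖z‖ := by gcongr; exact l.opNorm_comp_le jZV
  have hyoung : 0 ≤ α / 4 * ‖z‖ ^ 2 - ‖l‖ * ‖jZV‖ * ‖z‖ + (‖l‖ * ‖jZV‖) ^ 2 / α :=
    calc 0 ≤ (α / 2 * ‖z‖ - ‖l‖ * ‖jZV‖) ^ 2 / α := by positivity
      _ = _ := by field
  unfold tiltedEnergy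
  linarith [hA_ell z, hF_nonneg z]

theorem exists_tiltedEnergy_le (hDF : ∀ z, HasFDerivAt F ((DF z).comp jZV) z)
    (hDF_lip : LipschitzOnBounded DF) (ρ : ℝ) :
    ∃ S, ∀ (z : Z) (l : V →L[ℝ] ℝ), ‖z‖ + ‖l‖ ≤ ρ → tiltedEnergy jZV A F l z ≤ S := by
  have hF : LipschitzOnBounded F := .of_hasFDerivAt hDF fun _ hs =>
    (hDF_lip.clm_comp_const jZV).isBounded_image hs
  have hball : IsBounded (Metric.closedBall (0 : Z) ρ) := Metric.isBounded_closedBall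
  obtain ⟨S, hS⟩ := (hF.isBounded_image hball).exists_norm_le
  refine ⟨1 / 2 * (‖A‖ * ρ * ρ) + S + ρ * (‖jZV‖ * ρ), fun z l h => ?_⟩
  have hz : ‖z‖ ≤ ρ := by linarith [norm_nonneg l]
  have hl : ‖l‖ ≤ ρ := by linarith [norm_nonneg z]
  have hρ : 0 ≤ ρ := (norm_nonneg z).trans hz
  have hAz : A z z ≤ ‖A‖ * ρ * ρ :=
    calc A z z ≤ ‖A‖ * ‖z‖ * ‖z‖ := (le_abs_self _).trans (A.le_opNorm₂ z z)
      _ ≤ ‖A‖ * ρ * ρ := by gcongr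
  have hFz : F z ≤ S :=
    (le_abs_self _).trans (hS _ (mem_image_of_mem F (mem_closedBall_zero_iff.2 hz)))
  have hload : -l (jZV z) ≤ ρ * (‖jZV‖ * ρ) :=
    calc -l (jZV z) ≤ ‖l‖ * ‖jZV z‖ := (neg_le_abs _).trans (l.le_opNorm _)
      _ ≤ ‖l‖ * (‖jZV‖ * ‖z‖) := by gcongr; exact jZV.le_opNorm z
      _ ≤ ρ * (‖jZV‖ * ρ) := by gcongr
  unfold tiltedEnergy
  linarith

theorem exists_tiltedEnergy_sublevel_bound (hα : 0 < α) (hA_ell : ∀ z, α * ‖z‖ ^ 2 ≤ A z z)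
    (hF_nonneg : ∀ z, 0 ≤ F z) (hDF : ∀ z, HasFDerivAt F ((DF z).comp jZV) z)
    (hDF_lip : LipschitzOnBounded DF) (ρ : ℝ) :
    ∃ D > 0, ∀ (z₀ : Z) (l : V →L[ℝ] ℝ), ‖z₀‖ + ‖l‖ ≤ ρ → ∀ z,
      (tiltedEnergy jZV A F l z ≤ tiltedEnergy jZV A F l z₀ → ‖z‖ ≤ D) ∧
        tiltedEnergy jZV A F l z₀ - tiltedEnergy jZV A F l z ≤ D := by
  obtain ⟨S, hS⟩ := exists_tiltedEnergy_le (A := A) hDF hDF_lip ρ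
  set T := S + (ρ * ‖jZV‖) ^ 2 / α
  refine ⟨max 1 (max √(4 / α * T) T), by positivity, fun z₀ l h z => ?_⟩
  have hz₀ := hS z₀ l h
  have hcoercive : α / 4 * ‖z‖ ^ 2 ≤ tiltedEnergy jZV A F l z + (ρ * ‖jZV‖) ^ 2 / α :=
    calc α / 4 * ‖z‖ ^ 2 ≤ tiltedEnergy jZV A F l z + (‖l‖ * ‖jZV‖) ^ 2 / α :=
          mul_sq_norm_le_tiltedEnergy_add hα hA_ell hF_nonneg z
      _ ≤ tiltedEnergy jZV A F l z + (ρ * ‖jZV‖) ^ 2 / α := by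
          gcongr
          linarith [norm_nonneg z₀]
  constructor
  · intro hle
    refine .trans (Real.le_sqrt_of_sq_le ?_) ((le_max_left _ T).trans (le_max_right 1 _))
    calc ‖z‖ ^ 2 = 4 / α * (α / 4 * ‖z‖ ^ 2) := by field
      _ ≤ 4 / α * T := by gcongr; linarith
  · refine .trans ?_ ((le_max_right √(4 / α * T) T).trans (le_max_right 1 _))
    have : 0 ≤ α / 4 * ‖z‖ ^ 2 := by positivity
    linarith

end Energy

theorem isRegSol_iff_isGradientFlow [InnerProductSpace ℝ Z] [InnerProductSpace ℝ V]
    [NormedSpace ℝ X] {jZV : Z →L[ℝ] V} {jVX : V →L[ℝ] X} {A : Z →L[ℝ] Z →L[ℝ] ℝ}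
    {VV : V →L[ℝ] V →L[ℝ] ℝ} {R : X → ℝ} {DF : Z → V →L[ℝ] ℝ} {δ : ℝ} {l : V →L[ℝ] ℝ}
    {z₀ : Z} {z zd : ℝ → Z} :
    IsRegSol jZV jVX A VV R DF δ l z₀ z zd ↔
      z 0 = z₀ ∧ (∃ K, LipschitzOnWith K z (Ici 0)) ∧ (∃ K, LipschitzOnWith K zd (Ici 0)) ∧
        IsGradientFlow (regDissipation jZV jVX A VV R δ) (tiltedEnergyDeriv jZV A DF l)
          z zd := by
  have hpair : ∀ x u, (-tiltedEnergyDeriv jZV A DF l x) u =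
      l (jZV u) - (A x u + DF x (jZV u)) := fun x u => by
    simp only [tiltedEnergyDeriv, neg_apply, add_apply, sub_apply,
      ContinuousLinearMap.comp_apply]
    ring
  refine and_congr_right' (and_congr_right' (and_congr_right'
    ⟨fun h => ⟨h.1, fun t ht w => ?_⟩, fun h => ⟨h.1, fun t ht w => ?_⟩⟩))
  · rw [hpair]
    exact h.2 t ht w
  · rw [ge_iff_le, ← hpair]
    exact h.isSubgradient t ht w

end RegularizedSystem

theorem stmt6_general {Z V X : Type*}
    [NormedAddCommGroup Z] [InnerProductSpace ℝ Z] [CompleteSpace Z]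
    [NormedAddCommGroup V] [InnerProductSpace ℝ V]
    [NormedAddCommGroup X] [NormedSpace ℝ X]
    {jZV : Z →L[ℝ] V} {jVX : V →L[ℝ] X}
    {A : Z →L[ℝ] Z →L[ℝ] ℝ} (hA_symm : ∀ z w, A z w = A w z)
    {α : ℝ} (hα : 0 < α) (hA_ell : ∀ z, α * ‖z‖ ^ 2 ≤ A z z)
    {VV : V →L[ℝ] V →L[ℝ] ℝ} (hVV_nonneg : ∀ v, 0 ≤ VV v v)
    {R : X → ℝ} (hR_conv : ConvexOn ℝ univ R) (hR_cont : Continuous R)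
    (hR_zero : R 0 = 0) (hR_nonneg : ∀ x, 0 ≤ R x)
    {F : Z → ℝ} (hF_nonneg : ∀ z, 0 ≤ F z) {DF : Z → V →L[ℝ] ℝ}
    (hDF : ∀ z, HasFDerivAt F ((DF z).comp jZV) z) (hDF_lip : LipschitzOnBounded DF) :
    (∀ δ > 0, ∀ (z₀ : Z) (l : V →L[ℝ] ℝ), ∃ z zd : ℝ → Z,
      IsRegSol jZV jVX A VV R DF δ l z₀ z zd ∧
      ∀ z' zd' : ℝ → Z, IsRegSol jZV jVX A VV R DF δ l z₀ z' zd' → ∀ t ≥ 0, z' t = z t) ∧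
    ∀ ρ > 0, ∃ Cρ > 0, ∀ δ > 0, ∀ (z₀ : Z) (l : V →L[ℝ] ℝ), ‖z₀‖ + ‖l‖ ≤ ρ →
      ∀ z zd : ℝ → Z, IsRegSol jZV jVX A VV R DF δ l z₀ z zd →
        (∀ t ≥ 0, ‖z t‖ ≤ Cρ) ∧
        ∫⁻ t in Ioi 0, ENNReal.ofReal (regDissipation jZV jVX A VV R δ (zd t)) ≤
          ENNReal.ofReal Cρ := by
  have hA_nonneg z : 0 ≤ A z z := (by positivity : 0 ≤ α * ‖z‖ ^ 2).trans (hA_ell z)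
  let ψ : ℝ → Z → ℝ := regDissipation jZV jVX A VV R
  have hψ_zero δ : ψ δ 0 = 0 := regDissipation_zero hR_zero
  have hψ_cont δ : Continuous (ψ δ) := continuous_regDissipation hR_cont
  have hψ_nonneg δ (hδ : 0 < δ) : ∀ w, 0 ≤ ψ δ w :=
    regDissipation_nonneg hδ.le hA_nonneg hVV_nonneg hR_nonneg
  have hψ δ (hδ : 0 < δ) : StrongConvexOn univ (δ * α) (ψ δ) :=
    strongConvexOn_regDissipation hδ.le hA_ell hVV_nonneg hR_conv
  have hE l := hasFDerivAt_tiltedEnergy (l := l) hA_symm hDF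
  have hE_lip l := lipschitzOnBounded_tiltedEnergyDeriv (jZV := jZV) (A := A) (l := l) hDF_lip
  have hbound := exists_tiltedEnergy_sublevel_bound hα hA_ell hF_nonneg hDF hDF_lip
  simp only [isRegSol_iff_isGradientFlow]
  constructor
  · intro δ hδ z₀ l
    obtain ⟨D, -, hD⟩ := hbound (‖z₀‖ + ‖l‖)
    have hsublevel : IsBounded {z | tiltedEnergy jZV A F l z ≤ tiltedEnergy jZV A F l z₀} :=
      isBounded_iff_forall_norm_le.2 ⟨D, fun z => (hD z₀ l le_rfl z).1⟩
    obtain ⟨z, zd, h0, hz_lip, hzd_lip, hz⟩ := exists_isGradientFlow (hψ δ hδ) (mul_pos hδ hα)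
      (hψ_cont δ).lowerSemicontinuous (hψ_zero δ) (hψ_nonneg δ hδ) (hE l) (hE_lip l) hsublevel
    refine ⟨z, zd, ⟨h0, hz_lip, hzd_lip, hz⟩, fun z' zd' ⟨h0', _, _, hz'⟩ => ?_⟩
    exact hz'.eqOn (hψ δ hδ) (mul_pos hδ hα) (hψ_cont δ).lowerSemicontinuous
      ⟨0, forall_mem_range.2 (hψ_nonneg δ hδ)⟩ (hE_lip l) hz (h0'.trans h0.symm)
  · intro ρ _
    obtain ⟨D, hD_pos, hD⟩ := hbound ρ
    refine ⟨D, hD_pos, fun δ hδ z₀ l hρ z zd ⟨h0, _, ⟨K, hzd_lip⟩, hz⟩ => ⟨fun t ht => ?_, ?_⟩⟩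
    · refine (hD z₀ l hρ (z t)).1 ?_
      simpa only [Function.comp_apply, h0] using
        hz.antitoneOn_energy (hE l) (hψ_zero δ) (hψ_nonneg δ hδ) self_mem_Ici ht ht
    · refine hz.lintegral_dissipation_le (hE l) (hψ_zero δ) (hψ_nonneg δ hδ)
        ((hψ_cont δ).comp_continuousOn hzd_lip.continuousOn) fun t _ => ?_
      rw [h0]
      exact (hD z₀ l hρ (z t)).2

/-- Existence and uniqueness for the `δ`-regularized system
(Proposition `prop.exregularizedRplus` of the paper): for every `δ > 0`,
`z₀ ∈ Z` and `ℓ* ∈ V*` there is a unique `W^{2,∞}`-solution `z_δ` of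
`0 ∈ ∂R_δ(ż_δ) + DI(z_δ) − ℓ*` with `z_δ(0) = z₀`; moreover, for every
`ρ > 0` there is `C(ρ) > 0`, independent of `δ`, with
`sup_t ‖z_δ(t)‖_Z ≤ C(ρ)` and `∫₀^∞ R_δ(ż_δ) ≤ C(ρ)` whenever
`‖z₀‖_Z + ‖ℓ*‖_{V*} ≤ ρ`. -/
theorem stmt6
    {Z V X : Type*}
    [NormedAddCommGroup Z] [InnerProductSpace ℝ Z] [CompleteSpace Z]
    [TopologicalSpace.SeparableSpace Z]
    [NormedAddCommGroup V] [InnerProductSpace ℝ V] [CompleteSpace V]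
    [TopologicalSpace.SeparableSpace V]
    [NormedAddCommGroup X] [NormedSpace ℝ X]
    (jZV : Z →L[ℝ] V) (hjZV_inj : Function.Injective jZV)
    (hjZV_cpt : IsCompactOperator jZV)
    (jVX : V →L[ℝ] X) (hjVX_inj : Function.Injective jVX)
    (A : Z →L[ℝ] Z →L[ℝ] ℝ) (hA_symm : ∀ z w : Z, A z w = A w z)
    (α : ℝ) (hα : 0 < α) (hA_ell : ∀ z : Z, α * ‖z‖ ^ 2 ≤ A z z)
    (VV : V →L[ℝ] V →L[ℝ] ℝ) (hVV_symm : ∀ u v : V, VV u v = VV v u)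
    (γ : ℝ) (hγ : 0 < γ) (hVV_ell : ∀ v : V, γ * ‖v‖ ^ 2 ≤ VV v v)
    (R : X → ℝ) (hR_conv : ConvexOn ℝ Set.univ R) (hR_cont : Continuous R)
    (hR_hom : ∀ t : ℝ, 0 ≤ t → ∀ x : X, R (t • x) = t * R x)
    (c C : ℝ) (hc : 0 < c) (hC : 0 < C)
    (hR_low : ∀ x : X, c * ‖x‖ ≤ R x) (hR_up : ∀ x : X, R x ≤ C * ‖x‖)
    (F : Z → ℝ) (hF_nonneg : ∀ z : Z, 0 ≤ F z)
    (DF : Z → V →L[ℝ] ℝ)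
    (hDF : ∀ z : Z, HasFDerivAt F ((DF z).comp jZV) z)
    (D2F : Z → Z →L[ℝ] V →L[ℝ] ℝ)
    (hD2F : ∀ z : Z, HasFDerivAt DF (D2F z) z)
    (hD2F_cont : Continuous D2F)
    (C₀ q : ℝ) (hC₀ : 0 < C₀) (hq : 1 ≤ q)
    (hD2F_bound : ∀ z v : Z, ‖D2F z v‖ ≤ C₀ * (1 + ‖z‖ ^ q) * ‖v‖) :
    -- existence and uniqueness
    (∀ δ > (0:ℝ), ∀ (z₀ : Z) (lstar : V →L[ℝ] ℝ),
      ∃ (z zd : ℝ → Z),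
        IsRegSol jZV jVX A VV R DF δ lstar z₀ z zd ∧
        ∀ (z' zd' : ℝ → Z),
          IsRegSol jZV jVX A VV R DF δ lstar z₀ z' zd' →
          ∀ t ≥ (0:ℝ), z' t = z t) ∧
    -- uniform bounds, with C(ρ) independent of δ
    (∀ ρ > (0:ℝ), ∃ Cρ > (0:ℝ), ∀ δ > (0:ℝ), ∀ (z₀ : Z) (lstar : V →L[ℝ] ℝ),
      ‖z₀‖ + ‖lstar‖ ≤ ρ →
      ∀ (z zd : ℝ → Z),
        IsRegSol jZV jVX A VV R DF δ lstar z₀ z zd →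
        (∀ t ≥ (0:ℝ), ‖z t‖ ≤ Cρ) ∧
        (∫⁻ t in Set.Ioi (0:ℝ),
          ENNReal.ofReal (R (jVX (jZV (zd t)))
            + 1 / 2 * VV (jZV (zd t)) (jZV (zd t))
            + δ / 2 * A (zd t) (zd t))) ≤ ENNReal.ofReal Cρ) := by
  have hVV_nonneg v : 0 ≤ VV v v := (by positivity : 0 ≤ γ * ‖v‖ ^ 2).trans (hVV_ell v)
  have hR_zero : R 0 = 0 := by simpa using hR_hom 0 le_rfl 0
  have hR_nonneg x : 0 ≤ R x := (by positivity : 0 ≤ c * ‖x‖).trans (hR_low x)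
  have hDF_lip : LipschitzOnBounded DF := .of_hasFDerivAt hD2F fun _ =>
    isBounded_image_of_norm_apply_le_rpow hC₀.le (zero_le_one.trans hq) hD2F_bound
  exact stmt6_general hA_symm hα hA_ell hVV_nonneg hR_conv hR_cont hR_zero hR_nonneg hF_nonneg
    hDF hDF_lip
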